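/- Invariance of the product measure for the decomposable misanthrope generator: let n ≥ 1, α > 0, p(d) = ‖d‖^{-(n+α)} 1(d > 0), and assume additionally that g satisfies |g(k+1) − g(k)| ≤ κ for all k (so g(k) ≤ κk), that h is bounded, and that g(i) h(j) − g(j) h(i) = g(i) h(0) − g(j) h(0) for all i, j ∈ ℕ. Fix 0 ≤ λ < λ_c and let ν = ⊗_{x ∈ ℤ^n} Θ_λ be the product probability measure on ℕ^{ℤ^n}. For η ∈ ℕ^{ℤ^n} and x ≠ y, let η^{x,y} be the configuration obtained from η by decreasing η(x) by one (truncated at 0, which is immaterial since g(0) = 0) and increasing η(y) by one. Then for every bounded measurable f : ℕ^{ℤ^n} → ℝ depending on only finitely many coordinates, the family (x, d) ↦ p(d) ∫ g(η(x)) h(η(x+d)) ( f(η^{x, x+d}) − f(η) ) dν(η), indexed by x ∈ ℤ^n and d ∈ ℤ^n with d > 0, is absolutely summable and its sum equals 0. -/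

import Mathlib

open scoped BigOperators

/-- The coefficients `a_k = (∏_{j=0}^{k-1} h(j)) / (∏_{j=1}^{k} g(j))`, with `a_0 = 1`. -/
noncomputable def coefA (g h : ℕ → ℝ) (k : ℕ) : ℝ :=
  (∏ j ∈ Finset.range k, h j) / ∏ j ∈ Finset.range k, g (j + 1)

/-- The partition function `Z(λ) = Σ_{k ≥ 0} a_k λ^k`. -/
noncomputable def partZ (g h : ℕ → ℝ) (lam : ℝ) : ℝ :=
  ∑' k : ℕ, coefA g h k * lam ^ k

/-- The critical value `λ_c = liminf_{k → ∞} g(k+1)/h(k)` (as an extended real). -/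
noncomputable def lamCrit (g h : ℕ → ℝ) : EReal :=
  Filter.liminf (fun k : ℕ => ((g (k + 1) / h k : ℝ) : EReal)) Filter.atTop

/-- The probability mass function `Θ_λ({k}) = a_k λ^k / Z(λ)`. -/
noncomputable def thetaPMF (g h : ℕ → ℝ) (lam : ℝ) (k : ℕ) : ℝ :=
  coefA g h k * lam ^ k / partZ g h lam

open MeasureTheory

/-- Euclidean norm of a lattice point `d ∈ ℤ^n`. -/
noncomputable def latNorm (n : ℕ) (d : Fin n → ℤ) : ℝ :=
  Real.sqrt (∑ i, ((d i : ℝ)) ^ 2)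

/-- The configuration `η^{x,y}` obtained from `η` by moving a particle from `x` to `y`
(the subtraction at `x` is truncated at `0`, immaterial as `g(0) = 0`). -/
def moveConf (n : ℕ) (η : (Fin n → ℤ) → ℕ) (x y : Fin n → ℤ) : (Fin n → ℤ) → ℕ :=
  fun z => if z = x then η x - 1 else if z = y then η y + 1 else η z

/-!
Single-site detailed balance `g (k + 1) Θ({k + 1}) = λ h k Θ({k})` gives, by resampling one
coordinate of the product measure, `E[g(η_x) F(η - δ_x)] = λ E[h(η_x) F(η)]`. Used once at `x` and
once backwards at `y`, it turns the gain term `E[g(η_x) h(η_y) f(η - δ_x + δ_y)]` into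
`E[g(η_y) h(η_x) f(η)]`. By the commutation relation the whole term is then
`h 0 (G y - G x)` with `G x = E[g(η_x) f(η)]`. Since `G` is constant off the support of `f` and the
jump rates are summable, the sum over `(x, d)` telescopes to zero.
-/

section ProductMeasure

variable {ι : Type*} {X : ι → Type*} [∀ i, MeasurableSpace (X i)]

lemma eq_infinitePi_of_forall_cylinder [∀ i, Countable (X i)] [∀ i, MeasurableSingletonClass (X i)]
    (μ : ∀ i, Measure (X i)) [∀ i, IsProbabilityMeasure (μ i)] {ν : Measure (∀ i, X i)}
    (hν : ∀ (s : Finset ι) (a : ∀ i, X i), ν {η | ∀ i ∈ s, η i = a i} = ∏ i ∈ s, μ i {a i}) :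
    ν = Measure.infinitePi μ := by
  have (i : ι) : Nonempty (X i) := nonempty_of_isProbabilityMeasure (μ i)
  refine IsProjectiveLimit.unique (fun s => ?_) (Measure.isProjectiveLimit_infinitePi μ)
  refine Measure.ext_of_singleton fun b => ?_
  obtain ⟨a, rfl⟩ : ∃ a, s.restrict a = b := Subtype.surjective_restrict (· ∈ s) b
  have hpre : s.restrict ⁻¹' {s.restrict a} = {η | ∀ i ∈ s, η i = a i} := by
    ext η
    simp [funext_iff]
  rw [Measure.map_apply (by fun_prop) (measurableSet_singleton _), hpre, hν, Measure.pi_singleton,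
    ← Finset.prod_coe_sort]
  rfl

lemma exists_eq_infinitePi_of_forall_cylinder {Y : Type*} [MeasurableSpace Y] [Countable Y]
    [MeasurableSingletonClass Y] [Nonempty ι] {w : Y → ENNReal} {ν : Measure (ι → Y)}
    [IsProbabilityMeasure ν]
    (hν : ∀ (s : Finset ι) (a : ι → Y), ν {η | ∀ i ∈ s, η i = a i} = ∏ i ∈ s, w (a i)) :
    ∃ Θ : Measure Y, ∃ _ : IsProbabilityMeasure Θ,
      (∀ y, Θ {y} = w y) ∧ ν = Measure.infinitePi fun _ => Θ := by
  let i₀ : ι := Classical.arbitrary ι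
  have hi₀ : Measurable fun η : ι → Y => η i₀ := measurable_pi_apply i₀
  have hΘ : IsProbabilityMeasure (ν.map fun η => η i₀) :=
    Measure.isProbabilityMeasure_map hi₀.aemeasurable
  have hw (y : Y) : ν.map (fun η => η i₀) {y} = w y := by
    rw [Measure.map_apply hi₀ (measurableSet_singleton y)]
    simpa [Set.preimage] using hν {i₀} fun _ => y
  exact ⟨_, hΘ, hw, eq_infinitePi_of_forall_cylinder _ (by simpa only [hw] using hν)⟩

variable [DecidableEq ι] (μ : ∀ i, Measure (X i)) [∀ i, IsProbabilityMeasure (μ i)]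

lemma measurePreserving_update_infinitePi (i : ι) :
    MeasurePreserving (fun q : (∀ j, X j) × X i => Function.update q.1 i q.2)
      ((Measure.infinitePi μ).prod (μ i)) (Measure.infinitePi μ) := by
  refine ⟨measurable_update', Measure.eq_infinitePi μ fun s t ht => ?_⟩
  rw [Measure.map_apply measurable_update' (.pi s.countable_toSet fun j _ => ht j)]
  by_cases hi : i ∈ s
  · have hpre : (fun q : (∀ j, X j) × X i => Function.update q.1 i q.2) ⁻¹' (s : Set ι).pi t
        = ((s.erase i : Finset ι) : Set ι).pi t ×ˢ t i := by
      ext q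
      simp only [Set.mem_preimage, Set.mem_prod, Set.mem_pi, Finset.mem_coe, Finset.mem_erase]
      grind [Function.update_of_ne, Function.update_self]
    rw [hpre, Measure.prod_prod, Measure.infinitePi_pi μ fun j _ => ht j,
      Finset.prod_erase_mul _ _ hi]
  · have hpre : (fun q : (∀ j, X j) × X i => Function.update q.1 i q.2) ⁻¹' (s : Set ι).pi t
        = (s : Set ι).pi t ×ˢ Set.univ := by
      ext q
      simp only [Set.mem_preimage, Set.mem_prod, Set.mem_pi, Finset.mem_coe, Set.mem_univ]
      grind [Function.update_of_ne]
    rw [hpre, Measure.prod_prod, Measure.infinitePi_pi μ fun j _ => ht j, measure_univ, mul_one]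

variable {E : Type*} [NormedAddCommGroup E] [NormedSpace ℝ E] {F : (∀ i, X i) → E}

lemma integral_infinitePi_eq_integral_update (hF : Integrable F (Measure.infinitePi μ)) (i : ι) :
    ∫ η, F η ∂Measure.infinitePi μ
      = ∫ η, ∫ a, F (Function.update η i a) ∂μ i ∂Measure.infinitePi μ := by
  have hmp := measurePreserving_update_infinitePi μ i
  calc ∫ η, F η ∂Measure.infinitePi μ
      = ∫ q, F (Function.update q.1 i q.2) ∂(Measure.infinitePi μ).prod (μ i) := by
        rw [← integral_map hmp.aemeasurable (hmp.map_eq.symm ▸ hF.aestronglyMeasurable), hmp.map_eq]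
    _ = ∫ η, ∫ a, F (Function.update η i a) ∂μ i ∂Measure.infinitePi μ :=
        integral_prod _ (hmp.integrable_comp_of_integrable hF)

end ProductMeasure

section CountableIntegral

variable {E : Type*} [NormedAddCommGroup E] {X : Type*} [MeasurableSpace X]
  [MeasurableSingletonClass X] [Countable X] {μ : Measure X} [IsFiniteMeasure μ]

lemma integrable_iff_summable_real_singleton {φ : X → E} :
    Integrable φ μ ↔ Summable fun x => μ.real {x} * ‖φ x‖ := by
  conv_lhs => rw [← Measure.sum_smul_dirac μ]
  exact integrable_sum_dirac_iff fun x => measure_ne_top μ {x}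

lemma integral_eq_tsum_real_singleton [NormedSpace ℝ E] [FiniteDimensional ℝ E] (φ : X → E) :
    ∫ x, φ x ∂μ = ∑' x, μ.real {x} • φ x := by
  conv_lhs => rw [← Measure.sum_smul_dirac μ]
  exact integral_sum_dirac fun x => measure_ne_top μ {x}

end CountableIntegral

/-- The one-site balance relation between a law `Θ` of particle numbers, the rates `g`, `h` and the
fugacity `lam`; it holds for `Θ_λ`. -/
def DetailedBalance (g h : ℕ → ℝ) (lam : ℝ) (Θ : Measure ℕ) : Prop :=
  ∀ k, g (k + 1) * Θ.real {k + 1} = lam * (h k * Θ.real {k})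

namespace DetailedBalance

variable {g h : ℕ → ℝ} {lam : ℝ} {Θ : Measure ℕ} [IsFiniteMeasure Θ]

lemma integrable (hΘ : DetailedBalance g h lam Θ) (hh : Integrable h Θ) : Integrable g Θ := by
  rw [integrable_iff_summable_real_singleton] at hh ⊢
  refine (summable_nat_add_iff 1).mp ((hh.mul_left |lam|).congr fun k => ?_)
  have habs := congrArg abs (hΘ k)
  simp only [abs_mul, abs_of_nonneg measureReal_nonneg] at habs
  simp only [Real.norm_eq_abs]
  linarith

/-- Since `g 0 = 0`, the truncated value `F (0 - 1)` has no weight. -/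
lemma integral_mul_pred (hΘ : DetailedBalance g h lam Θ) (hg0 : g 0 = 0) (F : ℕ → ℝ) :
    ∫ k, g k * F (k - 1) ∂Θ = lam * ∫ k, h k * F k ∂Θ := by
  have hsupp : Function.support (fun k => Θ.real {k} • (g k * F (k - 1))) ⊆ Set.range Nat.succ := by
    rintro (_ | k) hk
    · simp [hg0] at hk
    · exact ⟨k, rfl⟩
  rw [← integral_const_mul, integral_eq_tsum_real_singleton, integral_eq_tsum_real_singleton,
    ← Nat.succ_injective.tsum_eq hsupp]
  refine tsum_congr fun k => ?_
  simp only [Nat.succ_eq_add_one, Nat.add_sub_cancel, smul_eq_mul]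
  linear_combination F k * hΘ k

end DetailedBalance

section Configurations

variable {V : Type*} [DecidableEq V]

/-- The configuration `η + δ_x`. -/
def addParticle (x : V) (η : V → ℕ) : V → ℕ :=
  Function.update η x (η x + 1)

/-- The configuration `η - δ_x`, truncated to `η` itself when the site `x` is empty. -/
def removeParticle (x : V) (η : V → ℕ) : V → ℕ :=
  Function.update η x (η x - 1)

lemma measurable_addParticle (x : V) : Measurable (addParticle x) :=
  measurable_update'.comp (measurable_id.prodMk
    ((measurable_of_countable fun k : ℕ => k + 1).comp (measurable_pi_apply x)))

lemma measurable_removeParticle (x : V) : Measurable (removeParticle x) :=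
  measurable_update'.comp (measurable_id.prodMk
    ((measurable_of_countable fun k : ℕ => k - 1).comp (measurable_pi_apply x)))

lemma removeParticle_update (x : V) (η : V → ℕ) (k : ℕ) :
    removeParticle x (Function.update η x k) = Function.update η x (k - 1) := by
  simp [removeParticle]

lemma removeParticle_of_ne {x y : V} (hyx : y ≠ x) (η : V → ℕ) : removeParticle x η y = η y :=
  Function.update_of_ne hyx _ _

lemma addParticle_removeParticle_self {x : V} {η : V → ℕ} (hx : η x ≠ 0) :
    addParticle x (removeParticle x η) = η := by
  simp [addParticle, removeParticle, Nat.sub_one_add_one hx]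

lemma moveConf_eq_addParticle_removeParticle {n : ℕ} {x y : Fin n → ℤ} (hxy : x ≠ y)
    (η : (Fin n → ℤ) → ℕ) : moveConf n η x y = addParticle y (removeParticle x η) := by
  funext z
  simp only [moveConf, addParticle, removeParticle, Function.update_apply]
  grind

end Configurations

section Invariance

variable {V : Type*} {Θ : Measure ℕ} [IsProbabilityMeasure Θ] {g h : ℕ → ℝ} {lam B : ℝ}
  {f : (V → ℕ) → ℝ}

lemma integrable_eval_infinitePi {φ : ℕ → ℝ} (hφ : Integrable φ Θ) (x : V) :
    Integrable (fun η : V → ℕ => φ (η x)) (Measure.infinitePi fun _ => Θ) :=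
  (measurePreserving_eval_infinitePi (fun _ : V => Θ) x).integrable_comp_of_integrable hφ

lemma integrable_eval_mul_eval_mul {φ ψ : ℕ → ℝ} (hφ : Integrable φ Θ) (hψ : Integrable ψ Θ)
    {x y : V} (hxy : x ≠ y) (hfm : Measurable f) (hfb : ∀ η, |f η| ≤ B) :
    Integrable (fun η => φ (η x) * ψ (η y) * f η) (Measure.infinitePi fun _ => Θ) := by
  have hind : ProbabilityTheory.IndepFun (fun η : V → ℕ => φ (η x)) (fun η => ψ (η y))
      (Measure.infinitePi fun _ => Θ) :=
    ((ProbabilityTheory.iIndepFun_infinitePi (P := fun _ : V => Θ)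
      fun _ => measurable_id).indepFun hxy).comp
        (measurable_of_countable φ) (measurable_of_countable ψ)
  exact (hind.integrable_mul (integrable_eval_infinitePi hφ x)
    (integrable_eval_infinitePi hψ y)).mul_bdd hfm.aestronglyMeasurable (.of_forall hfb)

lemma integral_eval_mul_of_dependsOn {φ : ℕ → ℝ} {x : V} {S : Set V} (hx : x ∉ S)
    (hfS : DependsOn f S)
    (hint : Integrable (fun η => φ (η x) * f η) (Measure.infinitePi fun _ => Θ)) :
    ∫ η, φ (η x) * f η ∂Measure.infinitePi (fun _ => Θ)
      = (∫ k, φ k ∂Θ) * ∫ η, f η ∂Measure.infinitePi fun _ => Θ := by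
  classical
  have hf (η : V → ℕ) (k : ℕ) : f (Function.update η x k) = f η :=
    hfS fun z hz => Function.update_of_ne (ne_of_mem_of_not_mem hz hx) _ _
  rw [integral_infinitePi_eq_integral_update _ hint x, ← integral_const_mul]
  simp only [Function.update_self, hf, integral_mul_const]

variable [DecidableEq V]

lemma integral_mul_comp_removeParticle (hΘ : DetailedBalance g h lam Θ) (hg0 : g 0 = 0) {x : V}
    {F : (V → ℕ) → ℝ}
    (hgF : Integrable (fun η => g (η x) * F (removeParticle x η)) (Measure.infinitePi fun _ => Θ))
    (hhF : Integrable (fun η => h (η x) * F η) (Measure.infinitePi fun _ => Θ)) :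
    ∫ η, g (η x) * F (removeParticle x η) ∂Measure.infinitePi (fun _ => Θ)
      = lam * ∫ η, h (η x) * F η ∂Measure.infinitePi fun _ => Θ := by
  rw [integral_infinitePi_eq_integral_update _ hgF x,
    integral_infinitePi_eq_integral_update _ hhF x, ← integral_const_mul]
  simp only [Function.update_self, removeParticle_update]
  exact integral_congr_ae (.of_forall fun η =>
    hΘ.integral_mul_pred hg0 fun k => F (Function.update η x k))

lemma integral_gain_eq (hΘ : DetailedBalance g h lam Θ) (hg0 : g 0 = 0) (hh : Integrable h Θ)
    (hfm : Measurable f) (hfb : ∀ η, |f η| ≤ B) {x y : V} (hxy : x ≠ y) :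
    ∫ η, g (η x) * h (η y) * f (addParticle y (removeParticle x η))
        ∂Measure.infinitePi (fun _ => Θ)
      = ∫ η, g (η y) * h (η x) * f η ∂Measure.infinitePi fun _ => Θ := by
  have hg := hΘ.integrable hh
  have hma := hfm.comp (measurable_addParticle y)
  have hrestore (η : V → ℕ) :
      g (η y) * (h (removeParticle y η x) * f (addParticle y (removeParticle y η)))
        = g (η y) * h (η x) * f η := by
    rcases eq_or_ne (η y) 0 with hy | hy
    · simp [hy, hg0]
    · rw [removeParticle_of_ne hxy, addParticle_removeParticle_self hy, mul_assoc]
  calc ∫ η, g (η x) * h (η y) * f (addParticle y (removeParticle x η))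
          ∂Measure.infinitePi (fun _ => Θ)
      = ∫ η, g (η x) * (h (removeParticle x η y) * f (addParticle y (removeParticle x η)))
          ∂Measure.infinitePi (fun _ => Θ) := by
        simp only [removeParticle_of_ne hxy.symm, mul_assoc]
    _ = lam * ∫ η, h (η x) * (h (η y) * f (addParticle y η)) ∂Measure.infinitePi (fun _ => Θ) := by
        refine integral_mul_comp_removeParticle (F := fun η => h (η y) * f (addParticle y η))
          hΘ hg0 ?_ ?_
        · simpa only [removeParticle_of_ne hxy.symm, mul_assoc, Function.comp_apply] using
            integrable_eval_mul_eval_mul hg hh hxy (hma.comp (measurable_removeParticle x))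
              fun η => hfb _
        · simpa only [mul_assoc, Function.comp_apply] using
            integrable_eval_mul_eval_mul hh hh hxy hma fun η => hfb _
    _ = lam * ∫ η, h (η y) * (h (η x) * f (addParticle y η)) ∂Measure.infinitePi (fun _ => Θ) := by
        simp only [mul_left_comm]
    _ = ∫ η, g (η y) * (h (removeParticle y η x) * f (addParticle y (removeParticle y η)))
          ∂Measure.infinitePi (fun _ => Θ) := by
        refine (integral_mul_comp_removeParticle (F := fun η => h (η x) * f (addParticle y η))
          hΘ hg0 ?_ ?_).symm
        · simpa only [hrestore] using integrable_eval_mul_eval_mul hg hh hxy.symm hfm hfb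
        · simpa only [mul_assoc, Function.comp_apply] using
            integrable_eval_mul_eval_mul hh hh hxy.symm hma fun η => hfb _
    _ = ∫ η, g (η y) * h (η x) * f η ∂Measure.infinitePi (fun _ => Θ) := by
        simp only [hrestore]

lemma integral_jump_eq (hΘ : DetailedBalance g h lam Θ) (hg0 : g 0 = 0) (hh : Integrable h Θ)
    (hcomm : ∀ i j : ℕ, g i * h j - g j * h i = g i * h 0 - g j * h 0)
    (hfm : Measurable f) (hfb : ∀ η, |f η| ≤ B) {x y : V} (hxy : x ≠ y) :
    ∫ η, g (η x) * h (η y) * (f (addParticle y (removeParticle x η)) - f η)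
        ∂Measure.infinitePi (fun _ => Θ)
      = h 0 * (∫ η, g (η y) * f η ∂Measure.infinitePi (fun _ => Θ)
          - ∫ η, g (η x) * f η ∂Measure.infinitePi fun _ => Θ) := by
  have hg := hΘ.integrable hh
  have hgf (z : V) : Integrable (fun η => g (η z) * f η) (Measure.infinitePi fun _ => Θ) :=
    (integrable_eval_infinitePi hg z).mul_bdd hfm.aestronglyMeasurable (.of_forall hfb)
  have hgain : Integrable (fun η => g (η x) * h (η y) * f (addParticle y (removeParticle x η)))
      (Measure.infinitePi fun _ => Θ) :=
    integrable_eval_mul_eval_mul hg hh hxy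
      (hfm.comp ((measurable_addParticle y).comp (measurable_removeParticle x))) fun η => hfb _
  have hloss := integrable_eval_mul_eval_mul hg hh hxy hfm hfb
  simp only [mul_sub]
  rw [integral_sub hgain hloss, integral_gain_eq hΘ hg0 hh hfm hfb hxy,
    ← integral_sub (integrable_eval_mul_eval_mul hg hh hxy.symm hfm hfb) hloss,
    ← integral_const_mul, ← integral_const_mul,
    ← integral_sub ((hgf y).const_mul _) ((hgf x).const_mul _)]
  refine integral_congr_ae (.of_forall fun η => ?_)
  linear_combination f η * hcomm (η y) (η x)

end Invariance

lemma hasSum_mul_sub_translate {V : Type*} [AddGroup V] (D : V → Prop) {u p : V → ℝ}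
    (hu : Summable u) (hp : Summable p) :
    HasSum (fun q : {q : V × V // D q.2} => p q.1.2 * (u (q.1.1 + q.1.2) - u q.1.1)) 0 := by
  let w : {q : V × V // D q.2} → ℝ := fun q => u q.1.1 * p q.1.2
  have hw : Summable w := (summable_mul_of_summable_norm hu.norm hp.norm).subtype _
  let shift : {q : V × V // D q.2} ≃ {q : V × V // D q.2} :=
    { toFun := fun q => ⟨(q.1.1 + q.1.2, q.1.2), q.2⟩
      invFun := fun q => ⟨(q.1.1 - q.1.2, q.1.2), q.2⟩
      left_inv := fun q => by simp
      right_inv := fun q => by simp }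
  have hdiff : HasSum (fun q => w (shift q) - w q) 0 := by
    simpa only [sub_self, Function.comp_apply] using (shift.hasSum_iff.mpr hw.hasSum).sub hw.hasSum
  refine hdiff.congr_fun fun q => ?_
  simp only [w, shift, Equiv.coe_fn_mk]
  ring

theorem product_measure_invariance_general {V : Type*} [AddGroup V] [DecidableEq V]
    {D : V → Prop} (hD : ¬D 0) {p : V → ℝ} (hp : Summable p) {g h : ℕ → ℝ} (hg0 : g 0 = 0)
    (hcomm : ∀ i j : ℕ, g i * h j - g j * h i = g i * h 0 - g j * h 0)
    {lam : ℝ} {Θ : Measure ℕ} [IsProbabilityMeasure Θ] (hΘ : DetailedBalance g h lam Θ)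
    (hh : Integrable h Θ) {f : (V → ℕ) → ℝ} (hfm : Measurable f) {B : ℝ}
    (hfb : ∀ η, |f η| ≤ B) {S : Finset V} (hfS : DependsOn f (S : Set V)) :
    HasSum (fun q : {q : V × V // D q.2} => p q.1.2 *
      ∫ η, g (η q.1.1) * h (η (q.1.1 + q.1.2)) *
        (f (addParticle (q.1.1 + q.1.2) (removeParticle q.1.1 η)) - f η)
          ∂Measure.infinitePi fun _ => Θ) 0 := by
  set G : V → ℝ := fun x => ∫ η, g (η x) * f η ∂Measure.infinitePi fun _ => Θ
  set c : ℝ := (∫ k, g k ∂Θ) * ∫ η, f η ∂Measure.infinitePi fun _ : V => Θ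
  have hGc : Summable fun x => G x - c :=
    summable_of_ne_finset_zero (s := S) fun x hx => sub_eq_zero.mpr <|
      integral_eval_mul_of_dependsOn (Finset.mem_coe.not.mpr hx) hfS <|
        (integrable_eval_infinitePi (hΘ.integrable hh) x).mul_bdd hfm.aestronglyMeasurable
          (.of_forall hfb)
  have htele := (hasSum_mul_sub_translate D hGc hp).mul_left (h 0)
  rw [mul_zero] at htele
  refine htele.congr_fun fun q => ?_
  have hq : q.1.1 ≠ q.1.1 + q.1.2 := fun heq => hD (left_eq_add.mp heq ▸ q.2)
  rw [integral_jump_eq hΘ hg0 hh hcomm hfm hfb hq]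
  ring

lemma summable_latNorm_rpow {n : ℕ} {r : ℝ} (hr : r < -n) :
    Summable fun d : Fin n → ℤ => latNorm n d ^ r := by
  let b := (EuclideanSpace.basisFun (Fin n) ℝ).toBasis
  let L := Submodule.span ℤ (Set.range b)
  have hrank : Module.finrank ℤ L = n := by
    rw [ZLattice.rank ℝ L, finrank_euclideanSpace_fin]
  let e : (Fin n → ℤ) ≃ₗ[ℤ] L := (b.restrictScalars ℤ).equivFun.symm
  have hcoord (d : Fin n → ℤ) (i : Fin n) : (e d : EuclideanSpace ℝ (Fin n)) i = d i := by
    have hrepr := b.restrictScalars_repr_apply ℤ (e d) i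
    rw [← Module.Basis.equivFun_apply, LinearEquiv.apply_symm_apply] at hrepr
    simpa [b] using hrepr.symm
  have hnorm (d : Fin n → ℤ) : latNorm n d = ‖e d‖ := by
    simp only [latNorm, Submodule.coe_norm, EuclideanSpace.norm_eq, hcoord, Real.norm_eq_abs,
      sq_abs]
  simp only [hnorm]
  exact (ZLattice.summable_norm_rpow L r (by rwa [hrank])).comp_injective e.injective

section ThetaPMF

variable {g h : ℕ → ℝ}

lemma thetaPMF_nonneg (hg : ∀ k : ℕ, 1 ≤ k → 0 < g k) (hh : ∀ k : ℕ, 0 < h k)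
    {lam : ℝ} (hlam : 0 ≤ lam) (k : ℕ) : 0 ≤ thetaPMF g h lam k := by
  have hweight (k : ℕ) : 0 ≤ coefA g h k * lam ^ k :=
    mul_nonneg (div_nonneg (Finset.prod_nonneg fun j _ => (hh j).le)
      (Finset.prod_nonneg fun j _ => (hg (j + 1) j.succ_pos).le)) (pow_nonneg hlam k)
  exact div_nonneg (hweight k) (tsum_nonneg hweight)

lemma mul_coefA_succ (hg : ∀ k : ℕ, 1 ≤ k → 0 < g k) (k : ℕ) :
    g (k + 1) * coefA g h (k + 1) = h k * coefA g h k := by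
  have hk := (hg (k + 1) k.succ_pos).ne'
  simp only [coefA, Finset.prod_range_succ]
  field_simp

lemma mul_thetaPMF_succ (hg : ∀ k : ℕ, 1 ≤ k → 0 < g k) (lam : ℝ) (k : ℕ) :
    g (k + 1) * thetaPMF g h lam (k + 1) = lam * (h k * thetaPMF g h lam k) := by
  unfold thetaPMF
  linear_combination (lam ^ (k + 1) / partZ g h lam) * mul_coefA_succ (h := h) hg k

lemma detailedBalance_of_singleton_eq_thetaPMF (hg : ∀ k : ℕ, 1 ≤ k → 0 < g k)
    (hh : ∀ k : ℕ, 0 < h k) {lam : ℝ} (hlam : 0 ≤ lam) {Θ : Measure ℕ}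
    (hΘ : ∀ k, Θ {k} = ENNReal.ofReal (thetaPMF g h lam k)) :
    DetailedBalance g h lam Θ := fun k => by
  simp only [measureReal_def, hΘ, ENNReal.toReal_ofReal (thetaPMF_nonneg hg hh hlam _)]
  exact mul_thetaPMF_succ hg lam k

end ThetaPMF

/-- Invariance of the product measure `ν = ⊗_x Θ_λ` for the decomposable
misanthrope generator with long-range totally asymmetric jump rate
`p(d) = ‖d‖^{-(n+α)} 1(d > 0)`: for every bounded measurable cylinder function `f`,
the family `(x, d) ↦ p(d) ∫ g(η(x)) h(η(x+d)) (f(η^{x,x+d}) − f(η)) dν`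
is absolutely summable with sum `0`. -/
theorem product_measure_invariance
    (n : ℕ) (hn : 0 < n) (α : ℝ) (hα : 0 < α)
    (g h : ℕ → ℝ) (hg0 : g 0 = 0) (hg : ∀ k : ℕ, 1 ≤ k → 0 < g k) (hh : ∀ k : ℕ, 0 < h k)
    (κ : ℝ) (hgLip : ∀ k : ℕ, |g (k + 1) - g k| ≤ κ)
    (hhBdd : ∃ M : ℝ, ∀ k : ℕ, |h k| ≤ M)
    (hcomm : ∀ i j : ℕ, g i * h j - g j * h i = g i * h 0 - g j * h 0)
    (lam : ℝ) (hlam0 : 0 ≤ lam) (hlamc : (lam : EReal) < lamCrit g h)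
    (ν : Measure ((Fin n → ℤ) → ℕ)) [IsProbabilityMeasure ν]
    (hν : ∀ (S : Finset (Fin n → ℤ)) (vals : (Fin n → ℤ) → ℕ),
        ν {η | ∀ x ∈ S, η x = vals x}
          = ∏ x ∈ S, ENNReal.ofReal (thetaPMF g h lam (vals x)))
    (f : ((Fin n → ℤ) → ℕ) → ℝ) (hfm : Measurable f) (hfb : ∃ M : ℝ, ∀ η, |f η| ≤ M)
    (S : Finset (Fin n → ℤ))
    (hfS : ∀ η η' : (Fin n → ℤ) → ℕ, (∀ x ∈ S, η x = η' x) → f η = f η') :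
    Summable (fun q : {q : (Fin n → ℤ) × (Fin n → ℤ) // 0 ≤ q.2 ∧ q.2 ≠ 0} =>
      |latNorm n q.1.2 ^ (-((n : ℝ) + α))
        * ∫ η, g (η q.1.1) * h (η (q.1.1 + q.1.2))
            * (f (moveConf n η q.1.1 (q.1.1 + q.1.2)) - f η) ∂ν|)
    ∧ (∑' q : {q : (Fin n → ℤ) × (Fin n → ℤ) // 0 ≤ q.2 ∧ q.2 ≠ 0},
        latNorm n q.1.2 ^ (-((n : ℝ) + α))
          * ∫ η, g (η q.1.1) * h (η (q.1.1 + q.1.2))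
              * (f (moveConf n η q.1.1 (q.1.1 + q.1.2)) - f η) ∂ν)
      = 0 := by
  obtain ⟨M, hM⟩ := hhBdd
  obtain ⟨B, hB⟩ := hfb
  obtain ⟨Θ, _, hΘ, rfl⟩ := exists_eq_infinitePi_of_forall_cylinder
    (w := fun k => ENNReal.ofReal (thetaPMF g h lam k)) hν
  have hsum := product_measure_invariance_general (D := fun d : Fin n → ℤ => 0 ≤ d ∧ d ≠ 0)
    (by simp) (summable_latNorm_rpow (r := -(n + α)) (by linarith)) hg0 hcomm
    (detailedBalance_of_singleton_eq_thetaPMF hg hh hlam0 hΘ)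
    (.of_bound (measurable_of_countable h).aestronglyMeasurable M (.of_forall hM)) hfm hB hfS
  have hmove (q : {q : (Fin n → ℤ) × (Fin n → ℤ) // 0 ≤ q.2 ∧ q.2 ≠ 0}) :=
    moveConf_eq_addParticle_removeParticle (left_eq_add.not.mpr q.2.2 : q.1.1 ≠ q.1.1 + q.1.2)
  simp only [hmove]
  exact ⟨hsum.summable.abs, hsum.tsum_eq⟩
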